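/- arXiv:2408.01517 — 3 statements merged into one kernel-verified Lean document; each statement's English description precedes it below -/
import Mathlib

section
/- Let y, x₀ ∈ ℝ^{QN}, let P : [0,1) → ℝ^{QN×QN} be continuous, and let x̃ : [0,1) → ℝ^{QN} be differentiable with x̃(0) = x₀ and ∂_t x̃(t) = −(1/(1−t)) P(t)(x̃(t) − y) for all t ∈ [0,1). Define R(t) := (x̃(t) − ((1−t)x₀ + t y))/(1−t). Then R(0) = 0 and R satisfies the linear inhomogeneous ODE ∂_t R(t) = (1/(1−t))(I − P(t)) R(t) + (1/(1−t))(I − P(t))(x₀ − y) for all t ∈ [0,1). -/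
open Matrix

/-!
For `t ≠ 1` one has `R t + (x₀ - y) = (1 - t)⁻¹ • (x t - y) =: u t`, so `R` and `u` have the same
derivative. The quotient rule gives `u' = (1 - t)⁻¹ • (x' + u)`: the equation for `x` says
`x' = -P u`, and differentiating the factor `(1 - t)⁻¹` contributes the `u` that turns `-P` into
`1 - P`.
-/

section

variable {𝕜 E : Type*} [NontriviallyNormedField 𝕜] [NormedAddCommGroup E] [NormedSpace 𝕜 E]
  {x₀ y x' : E} {x : 𝕜 → E} {s : Set 𝕜} {t : 𝕜}

/-- The deviation of the path `x` from the linear interpolation between `x₀` and `y`, rescaled by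
the remaining time `1 - t`; this is the function `R` of the theorem. At `t = 1` it is `0`, by the
convention `0⁻¹ = 0`. -/
def rescaledDeviation (x₀ y : E) (x : 𝕜 → E) (t : 𝕜) : E :=
  (1 - t)⁻¹ • (x t - ((1 - t) • x₀ + t • y))

theorem rescaledDeviation_zero (hx : x 0 = x₀) : rescaledDeviation x₀ y x 0 = 0 := by
  simp [rescaledDeviation, hx]

theorem rescaledDeviation_add_sub (ht : t ≠ 1) :
    rescaledDeviation x₀ y x t + (x₀ - y) = (1 - t)⁻¹ • (x t - y) := by
  have ht' : 1 - t ≠ 0 := sub_ne_zero.2 ht.symm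
  calc rescaledDeviation x₀ y x t + (x₀ - y)
    _ = (1 - t)⁻¹ • (x t - ((1 - t) • x₀ + t • y) + (1 - t) • (x₀ - y)) := by
      rw [rescaledDeviation, smul_add, inv_smul_smul₀ ht']
    _ = (1 - t)⁻¹ • (x t - y) := by
      congr 1
      module

theorem hasDerivWithinAt_inv_one_sub_smul (hx : HasDerivWithinAt x x' s t) (ht : t ≠ 1) :
    HasDerivWithinAt (fun r ↦ (1 - r)⁻¹ • x r) ((1 - t)⁻¹ • (x' + (1 - t)⁻¹ • x t)) s t := by
  have h_inv : HasDerivWithinAt (fun r : 𝕜 ↦ (1 - r)⁻¹) (-(-1) / (1 - t) ^ 2) s t :=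
    ((hasDerivWithinAt_id t s).const_sub 1).fun_inv (sub_ne_zero.2 ht.symm)
  refine (h_inv.fun_smul hx).congr_deriv ?_
  rw [neg_neg, one_div, ← inv_pow]
  module

theorem hasDerivWithinAt_rescaledDeviation (hx : HasDerivWithinAt x x' s t) (ht : t ≠ 1) :
    HasDerivWithinAt (rescaledDeviation x₀ y x) ((1 - t)⁻¹ • (x' + (1 - t)⁻¹ • (x t - y))) s t := by
  have h_eq : ∀ r ≠ 1, rescaledDeviation x₀ y x r = (1 - r)⁻¹ • (x r - y) - (x₀ - y) :=
    fun r hr ↦ eq_sub_of_add_eq (rescaledDeviation_add_sub hr)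
  refine ((hasDerivWithinAt_inv_one_sub_smul (hx.sub_const y) ht).sub_const (x₀ - y))
    |>.congr_of_eventuallyEq ?_ (h_eq t ht)
  filter_upwards [nhdsWithin_le_nhds (isOpen_ne.mem_nhds ht)] using h_eq

theorem stmt_8_general (P : 𝕜 → Module.End 𝕜 E) (hs : 1 ∉ s) (hx0 : x 0 = x₀)
    (hode : ∀ t ∈ s, HasDerivWithinAt x (-((1 - t)⁻¹ • P t (x t - y))) s t) :
    rescaledDeviation x₀ y x 0 = 0 ∧
    ∀ t ∈ s,
      HasDerivWithinAt (rescaledDeviation x₀ y x)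
        ((1 - t)⁻¹ • (1 - P t) (rescaledDeviation x₀ y x t) + (1 - t)⁻¹ • (1 - P t) (x₀ - y))
        s t := by
  refine ⟨rescaledDeviation_zero hx0, fun t ht ↦ ?_⟩
  have ht1 : t ≠ 1 := ne_of_mem_of_not_mem ht hs
  refine (hasDerivWithinAt_rescaledDeviation (hode t ht) ht1).congr_deriv ?_
  rw [← smul_add, ← map_add, rescaledDeviation_add_sub ht1, LinearMap.sub_apply,
    Module.End.one_apply, map_smul, neg_add_eq_sub]

end

/-- If x̃ solves ∂_t x̃ = −(1/(1−t)) P(t)(x̃(t) − y) on [0,1) with x̃(0) = x₀,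
then R(t) := (x̃(t) − ((1−t)x₀ + t y))/(1−t) satisfies R(0) = 0 and the linear
inhomogeneous ODE ∂_t R = (1/(1−t))(I − P(t)) R + (1/(1−t))(I − P(t))(x₀ − y). -/
theorem stmt_8 (d : ℕ) (y x₀ : Fin d → ℝ)
    (P : ℝ → Matrix (Fin d) (Fin d) ℝ) (hP : ContinuousOn P (Set.Ico 0 1))
    (xt : ℝ → Fin d → ℝ) (hx0 : xt 0 = x₀)
    (hode : ∀ t ∈ Set.Ico (0 : ℝ) 1,
      HasDerivWithinAt xt (-((1 / (1 - t)) • (P t *ᵥ (xt t - y)))) (Set.Ico 0 1) t)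
    (R : ℝ → Fin d → ℝ)
    (hR : ∀ t, R t = (1 / (1 - t)) • (xt t - ((1 - t) • x₀ + t • y))) :
    R 0 = 0 ∧
    ∀ t ∈ Set.Ico (0 : ℝ) 1,
      HasDerivWithinAt R
        ((1 / (1 - t)) • ((1 - P t) *ᵥ R t) +
          (1 / (1 - t)) • ((1 - P t) *ᵥ (x₀ - y)))
        (Set.Ico 0 1) t := by
  simp only [one_div] at hode hR ⊢
  obtain rfl : R = rescaledDeviation x₀ y xt := funext hR
  simpa only [LinearMap.sub_apply, Module.End.one_apply, mulVecLin_apply, sub_mulVec,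
    one_mulVec] using
    stmt_8_general (fun t ↦ (P t).mulVecLin) Set.right_notMem_Ico hx0 hode
end

section
/- Let y, x₀ ∈ ℝ^{QN}, let P : [0,1) → ℝ^{QN×QN} be continuous, and let x̃ : [0,1) → ℝ^{QN} be differentiable with x̃(0) = x₀ and ∂_t x̃(t) = −(1/(1−t)) P(t)(x̃(t) − y) for all t ∈ [0,1). Let U(t,t') ∈ ℝ^{QN×QN} be the linear propagator determined by ∂_t U(t,t') = (1/(1−t))(I − P(t)) U(t,t') with U(t',t') = I, for t, t' ∈ [0,1). Then the deviation from linear interpolation satisfies, for all t ∈ [0,1): x̃(t) − ((1−t)x₀ + t y) = ∫₀ᵗ U(t,t') · ((1−t)/(1−t')) · (I − P(t'))(x₀ − y) dt'. -/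
open Matrix

attribute [local instance] Matrix.normedAddCommGroup Matrix.normedSpace

/-!
The rescaled displacement `w t = (x t - y) / (1 - t)` absorbs the drift towards `y`: it solves the
homogeneous equation `w' = a w` with `a t = (1 - P t) / (1 - t)`, whose propagator is `U`. Its
increment `w - w 0` then solves `v' = a v + a (w 0)` with `v 0 = 0`, so Duhamel's formula gives
`w t - w 0 = ∫ s in 0..t, U t s (a s (w 0))`. Multiplying by `1 - t` turns the left-hand side into
the deviation of `x` from linear interpolation.

Duhamel's formula integrates `∂ₛ (U t s (v s)) = U t s (f s)`. It needs `∂ₛ U t s = -U t s a s`,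
although `U` is only assumed to be differentiable in its first variable: by uniqueness for linear
equations `U t s` is the inverse of `U s t`, and inversion is differentiable.
-/

open Set

section LinearODE

variable {E : Type*} [NormedAddCommGroup E] [NormedSpace ℝ E] {J : Set ℝ}

theorem exists_forall_lipschitzWith_of_continuousOn {a : ℝ → E →L[ℝ] E} {K : Set ℝ}
    (hK : IsCompact K) (ha : ContinuousOn a K) : ∃ C, ∀ t ∈ K, LipschitzWith C (a t) := by
  obtain ⟨C, hC⟩ := hK.exists_bound_of_continuousOn ha
  exact ⟨C.toNNReal, fun t ht => (a t).lipschitz.weaken (NNReal.coe_le_coe.1 <|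
    (hC t ht).trans (Real.le_coe_toNNReal C))⟩

theorem eqOn_of_hasDerivWithinAt_clm_apply {a : ℝ → E →L[ℝ] E} {f g : ℝ → E} {s : ℝ}
    (hJ : J.OrdConnected) (ha : ContinuousOn a J)
    (hf : ∀ t ∈ J, HasDerivWithinAt f (a t (f t)) J t)
    (hg : ∀ t ∈ J, HasDerivWithinAt g (a t (g t)) J t)
    (hs : s ∈ J) (hfg : f s = g s) : EqOn f g J := by
  intro t ht
  have hf_cont : ContinuousOn f J := fun r hr => (hf r hr).continuousWithinAt
  have hg_cont : ContinuousOn g J := fun r hr => (hg r hr).continuousWithinAt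
  rcases le_total s t with hst | hts
  · have hsub : Icc s t ⊆ J := hJ.out hs ht
    obtain ⟨C, hC⟩ := exists_forall_lipschitzWith_of_continuousOn isCompact_Icc (ha.mono hsub)
    have hJ_nhds : ∀ r ∈ Ico s t, J ∈ nhdsWithin r (Ici r) := fun r hr =>
      Filter.mem_of_superset (Icc_mem_nhdsGE hr.2) (hJ.out (hsub (Ico_subset_Icc_self hr)) ht)
    exact ODE_solution_unique_of_mem_Icc_right (v := fun r => a r) (s := fun _ => univ)
      (fun r hr => (hC r (Ico_subset_Icc_self hr)).lipschitzOnWith) (hf_cont.mono hsub)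
      (fun r hr => (hf r (hsub (Ico_subset_Icc_self hr))).mono_of_mem_nhdsWithin (hJ_nhds r hr))
      (fun _ _ => mem_univ _) (hg_cont.mono hsub)
      (fun r hr => (hg r (hsub (Ico_subset_Icc_self hr))).mono_of_mem_nhdsWithin (hJ_nhds r hr))
      (fun _ _ => mem_univ _) hfg (right_mem_Icc.2 hst)
  · have hsub : Icc t s ⊆ J := hJ.out ht hs
    obtain ⟨C, hC⟩ := exists_forall_lipschitzWith_of_continuousOn isCompact_Icc (ha.mono hsub)
    have hJ_nhds : ∀ r ∈ Ioc t s, J ∈ nhdsWithin r (Iic r) := fun r hr =>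
      Filter.mem_of_superset (Icc_mem_nhdsLE hr.1) (hJ.out ht (hsub (Ioc_subset_Icc_self hr)))
    exact ODE_solution_unique_of_mem_Icc_left (v := fun r => a r) (s := fun _ => univ)
      (fun r hr => (hC r (Ioc_subset_Icc_self hr)).lipschitzOnWith) (hf_cont.mono hsub)
      (fun r hr => (hf r (hsub (Ioc_subset_Icc_self hr))).mono_of_mem_nhdsWithin (hJ_nhds r hr))
      (fun _ _ => mem_univ _) (hg_cont.mono hsub)
      (fun r hr => (hg r (hsub (Ioc_subset_Icc_self hr))).mono_of_mem_nhdsWithin (hJ_nhds r hr))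
      (fun _ _ => mem_univ _) hfg (left_mem_Icc.2 hts)

theorem integral_eq_sub_of_hasDerivWithinAt_of_ordConnected [CompleteSpace E] {f f' : ℝ → E}
    {t₀ t : ℝ} (hJ : J.OrdConnected) (hf : ∀ s ∈ J, HasDerivWithinAt f (f' s) J s)
    (hf' : ContinuousOn f' J) (ht₀ : t₀ ∈ J) (ht : t ∈ J) :
    ∫ s in t₀..t, f' s = f t - f t₀ := by
  have hsub : uIcc t₀ t ⊆ J := hJ.uIcc_subset ht₀ ht
  refine intervalIntegral.integral_eq_sub_of_hasDeriv_right
    (fun s hs => (hf s (hsub hs)).continuousWithinAt.mono hsub) (fun s hs => ?_)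
    (hf'.mono hsub).intervalIntegrable
  have hJ_nhds : J ∈ nhds s := Filter.mem_of_superset (Icc_mem_nhds hs.1 hs.2) hsub
  exact ((hf s (hsub (Ioo_subset_Icc_self hs))).hasDerivAt hJ_nhds).hasDerivWithinAt

end LinearODE

/-- `U` is a propagator of the linear equation `∂ₜ u = a t * u` on the set of times `J`: for every
initial time `s ∈ J`, the function `U · s` is a solution on `J` with value `1` at time `s`.
Derivatives are taken within `J`, hence one-sided at an endpoint of `J`; nothing is assumed on how
`U t s` depends on `s`. -/
structure IsPropagator {𝔸 : Type*} [NormedRing 𝔸] [NormedAlgebra ℝ 𝔸] (a : ℝ → 𝔸) (U : ℝ → ℝ → 𝔸)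
    (J : Set ℝ) : Prop where
  self_eq_one : ∀ s ∈ J, U s s = 1
  hasDerivWithinAt : ∀ s ∈ J, ∀ t ∈ J, HasDerivWithinAt (fun τ => U τ s) (a t * U t s) J t

namespace IsPropagator

variable {J : Set ℝ}

section BanachAlgebra

variable {𝔸 : Type*} [NormedRing 𝔸] [NormedAlgebra ℝ 𝔸] {a : ℝ → 𝔸} {U : ℝ → ℝ → 𝔸} {r s t : ℝ}

theorem mul_eq (hU : IsPropagator a U J) (hJ : J.OrdConnected) (ha : ContinuousOn a J)
    (hr : r ∈ J) (hs : s ∈ J) (ht : t ∈ J) : U t s * U s r = U t r := by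
  have ha_mul : ContinuousOn (fun τ => ContinuousLinearMap.mul ℝ 𝔸 (a τ)) J :=
    (ContinuousLinearMap.mul ℝ 𝔸).continuous.comp_continuousOn ha
  refine eqOn_of_hasDerivWithinAt_clm_apply (f := fun τ => U τ s * U s r) hJ ha_mul
    (fun τ hτ => ?_) (hU.hasDerivWithinAt r hr) hs (by simp only [hU.self_eq_one s hs, one_mul]) ht
  simpa only [mul_assoc, ContinuousLinearMap.mul_apply'] using
    (hU.hasDerivWithinAt s hs τ hτ).mul_const (U s r)

theorem mul_swap_eq_one (hU : IsPropagator a U J) (hJ : J.OrdConnected) (ha : ContinuousOn a J)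
    (hs : s ∈ J) (ht : t ∈ J) : U t s * U s t = 1 := by
  rw [hU.mul_eq hJ ha ht hs ht, hU.self_eq_one t ht]

theorem hasDerivWithinAt_right [CompleteSpace 𝔸] (hU : IsPropagator a U J) (hJ : J.OrdConnected)
    (ha : ContinuousOn a J) (hs : s ∈ J) (ht : t ∈ J) :
    HasDerivWithinAt (fun τ => U t τ) (-(U t s * a s)) J s := by
  let unit (τ : ℝ) (hτ : τ ∈ J) : 𝔸ˣ :=
    ⟨U τ t, U t τ, hU.mul_swap_eq_one hJ ha ht hτ, hU.mul_swap_eq_one hJ ha hτ ht⟩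
  have hinv : ∀ τ ∈ J, U t τ = Ring.inverse (U τ t) := fun τ hτ =>
    (Ring.inverse_unit (unit τ hτ)).symm
  have hderiv : HasDerivWithinAt (fun τ => Ring.inverse (U τ t))
      (-(U t s * (a s * U s t) * U t s)) J s :=
    (hasFDerivAt_ringInverse (𝕜 := ℝ) (unit s hs)).comp_hasDerivWithinAt (f := fun τ => U τ t) s
      (hU.hasDerivWithinAt t ht s hs)
  refine (hderiv.congr hinv (hinv s hs)).congr_deriv ?_
  rw [mul_assoc, mul_assoc, hU.mul_swap_eq_one hJ ha ht hs, mul_one]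

end BanachAlgebra

section Apply

variable {E : Type*} [NormedAddCommGroup E] [NormedSpace ℝ E] [CompleteSpace E]
  {a : ℝ → E →L[ℝ] E} {U : ℝ → ℝ → E →L[ℝ] E} {t₀ t : ℝ}

theorem sub_apply_eq_integral {v f : ℝ → E} (hU : IsPropagator a U J) (hJ : J.OrdConnected)
    (ha : ContinuousOn a J) (hf : ContinuousOn f J)
    (hv : ∀ s ∈ J, HasDerivWithinAt v (a s (v s) + f s) J s) (ht₀ : t₀ ∈ J) (ht : t ∈ J) :
    v t - U t t₀ (v t₀) = ∫ s in t₀..t, U t s (f s) := by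
  have hU_deriv : ∀ s ∈ J, HasDerivWithinAt (fun τ => U t τ) (-(U t s * a s)) J s :=
    fun s hs => hU.hasDerivWithinAt_right hJ ha hs ht
  have hUv_deriv : ∀ s ∈ J, HasDerivWithinAt (fun τ => U t τ (v τ)) (U t s (f s)) J s :=
    fun s hs => ((hU_deriv s hs).clm_apply (hv s hs)).congr_deriv (by simp)
  have hUf_cont : ContinuousOn (fun s => U t s (f s)) J :=
    ContinuousOn.clm_apply (fun s hs => (hU_deriv s hs).continuousWithinAt) hf
  rw [integral_eq_sub_of_hasDerivWithinAt_of_ordConnected hJ hUv_deriv hUf_cont ht₀ ht,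
    hU.self_eq_one t ht, one_apply_eq_self]

theorem sub_eq_integral {w : ℝ → E} (hU : IsPropagator a U J) (hJ : J.OrdConnected)
    (ha : ContinuousOn a J) (hw : ∀ s ∈ J, HasDerivWithinAt w (a s (w s)) J s)
    (ht₀ : t₀ ∈ J) (ht : t ∈ J) :
    w t - w t₀ = ∫ s in t₀..t, U t s (a s (w t₀)) := by
  have hv : ∀ s ∈ J, HasDerivWithinAt (fun τ => w τ - w t₀)
      (a s (w s - w t₀) + a s (w t₀)) J s := fun s hs =>
    ((hw s hs).sub_const (w t₀)).congr_deriv (by rw [map_sub, sub_add_cancel])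
  simpa using hU.sub_apply_eq_integral hJ ha (ha.clm_apply continuousOn_const) hv ht₀ ht

end Apply

end IsPropagator

section Interpolation

variable {E : Type*} [NormedAddCommGroup E] [NormedSpace ℝ E] {J : Set ℝ} {x : ℝ → E} {t : ℝ}

theorem hasDerivWithinAt_one_div_one_sub_smul_sub {A : E →L[ℝ] E} {y : E} (ht : t ≠ 1)
    (hx : HasDerivWithinAt x (-((1 / (1 - t)) • A (x t - y))) J t) :
    HasDerivWithinAt (fun τ => (1 / (1 - τ)) • (x τ - y))
      (((1 / (1 - t)) • (1 - A)) ((1 / (1 - t)) • (x t - y))) J t := by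
  have hne : 1 - t ≠ 0 := sub_ne_zero.2 ht.symm
  have hscale :
      HasDerivWithinAt (fun τ : ℝ => 1 / (1 - τ)) ((1 / (1 - t)) * (1 / (1 - t))) J t := by
    have hinv := (((hasDerivAt_id t).const_sub 1).fun_inv hne).hasDerivWithinAt (s := J)
    simpa [one_div, div_eq_mul_inv, sq] using hinv
  refine (hscale.fun_smul (hx.sub_const y)).congr_deriv ?_
  simp only [_root_.smul_apply, _root_.sub_apply, one_apply_eq_self, map_smul]
  module

theorem sub_interpolation_eq_one_sub_smul (u x₀ y : E) (ht : t ≠ 1) :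
    u - ((1 - t) • x₀ + t • y) = (1 - t) • ((1 / (1 - t)) • (u - y) - (x₀ - y)) := by
  have hne : 1 - t ≠ 0 := sub_ne_zero.2 ht.symm
  rw [smul_sub, smul_smul, mul_one_div_cancel hne]
  module

theorem stmt_9_general [CompleteSpace E] (hJ : J.OrdConnected) (h0 : (0 : ℝ) ∈ J)
    (h1 : (1 : ℝ) ∉ J) {y : E} {P : ℝ → E →L[ℝ] E} (hP : ContinuousOn P J)
    (hx : ∀ t ∈ J, HasDerivWithinAt x (-((1 / (1 - t)) • P t (x t - y))) J t)
    {U : ℝ → ℝ → E →L[ℝ] E} (hU : IsPropagator (fun t => (1 / (1 - t)) • (1 - P t)) U J)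
    (ht : t ∈ J) :
    x t - ((1 - t) • x 0 + t • y) =
      ∫ t' in (0 : ℝ)..t, U t t' (((1 - t) / (1 - t')) • (1 - P t') (x 0 - y)) := by
  have hne : ∀ s ∈ J, s ≠ 1 := fun s hs => ne_of_mem_of_not_mem hs h1
  have ha : ContinuousOn (fun s => (1 / (1 - s)) • (1 - P s)) J :=
    (continuousOn_const.div (continuousOn_const.sub continuousOn_id)
      fun s hs => sub_ne_zero.2 (hne s hs).symm).smul (continuousOn_const.sub hP)
  have hw : ∀ s ∈ J, HasDerivWithinAt (fun τ => (1 / (1 - τ)) • (x τ - y))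
      (((1 / (1 - s)) • (1 - P s)) ((1 / (1 - s)) • (x s - y))) J s :=
    fun s hs => hasDerivWithinAt_one_div_one_sub_smul_sub (hne s hs) (hx s hs)
  have hincrement : (1 / (1 - t)) • (x t - y) - (x 0 - y) =
      ∫ s in (0 : ℝ)..t, U t s (((1 / (1 - s)) • (1 - P s)) (x 0 - y)) := by
    simpa only [sub_zero, div_one, one_smul] using hU.sub_eq_integral hJ ha hw h0 ht
  rw [sub_interpolation_eq_one_sub_smul (x t) (x 0) y (hne t ht), hincrement,
    ← intervalIntegral.integral_smul]
  simp only [_root_.smul_apply, map_smul, smul_smul, mul_one_div]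

end Interpolation

section Matrix

/-- The action of square real matrices on column vectors, as an isomorphism onto the algebra of
continuous linear operators. The entrywise sup norm on matrices is not submultiplicative, so
propagators in the matrix algebra are studied through this isomorphism. -/
noncomputable def mulVecCLM (n : Type*) [Fintype n] [DecidableEq n] :
    Matrix n n ℝ ≃ₐ[ℝ] ((n → ℝ) →L[ℝ] (n → ℝ)) :=
  Matrix.toLinAlgEquiv'.trans (Module.End.toContinuousLinearMap (n → ℝ))

variable {n : Type*} [Fintype n] [DecidableEq n]

theorem mulVecCLM_apply (M : Matrix n n ℝ) (v : n → ℝ) : mulVecCLM n M v = M *ᵥ v :=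
  rfl

theorem mulVecCLM_smul_one_sub (c : ℝ) (M : Matrix n n ℝ) :
    mulVecCLM n (c • (1 - M)) = c • (1 - mulVecCLM n M) := by
  rw [← map_one (mulVecCLM n), ← map_sub]
  exact map_smul (mulVecCLM n) c (1 - M)

theorem continuous_mulVecCLM : Continuous (mulVecCLM n) :=
  (mulVecCLM n).toLinearMap.continuous_of_finiteDimensional

theorem hasDerivWithinAt_mulVecCLM {M : ℝ → Matrix n n ℝ} {M' : Matrix n n ℝ} {J : Set ℝ} {t : ℝ}
    (hM : HasDerivWithinAt M M' J t) :
    HasDerivWithinAt (fun τ => mulVecCLM n (M τ)) (mulVecCLM n M') J t :=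
  (LinearMap.toContinuousLinearMap
    (mulVecCLM n).toLinearMap).hasFDerivAt.comp_hasDerivWithinAt t hM

theorem isPropagator_mulVecCLM {a : ℝ → Matrix n n ℝ} {U : ℝ → ℝ → Matrix n n ℝ} {J : Set ℝ}
    (hU_self : ∀ s ∈ J, U s s = 1)
    (hU_deriv : ∀ s ∈ J, ∀ t ∈ J, HasDerivWithinAt (fun τ => U τ s) (a t * U t s) J t) :
    IsPropagator (fun t => mulVecCLM n (a t)) (fun t s => mulVecCLM n (U t s)) J where
  self_eq_one s hs := by rw [hU_self s hs, map_one]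
  hasDerivWithinAt s hs t ht := by
    rw [← map_mul]
    exact hasDerivWithinAt_mulVecCLM (hU_deriv s hs t ht)

end Matrix

/-- Deviation from linear interpolation under rank loss: if x̃ solves
∂_t x̃ = −(1/(1−t)) P(t)(x̃(t) − y) with x̃(0) = x₀, and U(t,t') is the
propagator of ∂_t U(t,t') = (1/(1−t))(I − P(t)) U(t,t'), U(t',t') = I, then
x̃(t) − ((1−t)x₀ + t y) = ∫₀ᵗ U(t,t') ((1−t)/(1−t')) (I − P(t'))(x₀ − y) dt'. -/
theorem stmt_9 (d : ℕ) (y x₀ : Fin d → ℝ)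
    (P : ℝ → Matrix (Fin d) (Fin d) ℝ) (hP : ContinuousOn P (Set.Ico 0 1))
    (xt : ℝ → Fin d → ℝ) (hx0 : xt 0 = x₀)
    (hode : ∀ t ∈ Set.Ico (0 : ℝ) 1,
      HasDerivWithinAt xt (-((1 / (1 - t)) • (P t *ᵥ (xt t - y)))) (Set.Ico 0 1) t)
    (U : ℝ → ℝ → Matrix (Fin d) (Fin d) ℝ)
    (hU0 : ∀ t' ∈ Set.Ico (0 : ℝ) 1, U t' t' = 1)
    (hUode : ∀ t' ∈ Set.Ico (0 : ℝ) 1, ∀ t ∈ Set.Ico (0 : ℝ) 1,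
      HasDerivWithinAt (fun τ => U τ t')
        ((1 / (1 - t)) • ((1 - P t) * U t t')) (Set.Ico 0 1) t) :
    ∀ t ∈ Set.Ico (0 : ℝ) 1,
      xt t - ((1 - t) • x₀ + t • y) =
        ∫ t' in (0 : ℝ)..t,
          U t t' *ᵥ (((1 - t) / (1 - t')) • ((1 - P t') *ᵥ (x₀ - y))) := by
  intro t ht
  have hU : IsPropagator (fun t => (1 / (1 - t)) • (1 - mulVecCLM (Fin d) (P t)))
      (fun t t' => mulVecCLM (Fin d) (U t t')) (Set.Ico 0 1) := by
    simp_rw [← mulVecCLM_smul_one_sub]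
    exact isPropagator_mulVecCLM hU0 (by simpa only [Matrix.smul_mul] using hUode)
  simpa only [hx0, Function.comp_apply, mulVecCLM_apply, _root_.sub_apply, one_apply_eq_self,
    Matrix.sub_mulVec, Matrix.one_mulVec] using
    stmt_9_general Set.ordConnected_Ico (Set.left_mem_Ico.2 one_pos) Set.right_notMem_Ico
      (continuous_mulVecCLM.comp_continuousOn hP) hode hU ht
end

section
/- Let Q ≥ 2, z ∈ ℝ^Q, and let H = diag(σ(z)) − σ(z) σ(z)ᵀ. If v ∈ ℝ^Q satisfies v · u_Q = 0 and v ≠ 0, then ⟨v, H v⟩ > 0. That is, the Hessian of the cross-entropy loss is positive-definite when restricted to directions tangent to the affine hyperplanes H_c = { z : z · u_Q = c }. -/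
open Matrix Finset

/-- The softmax function on ℝ^Q. -/
noncomputable def softmax {Q : ℕ} (z : Fin Q → ℝ) : Fin Q → ℝ :=
  fun j => Real.exp (z j) / ∑ i, Real.exp (z i)

/-!
For a probability vector `w`, the quadratic form of `diag w - w wᵀ` at `v` is the variance of `v`
under `w`. When `w` has full support, as `softmax z` does, the variance vanishes only for constant
`v`, and a nonzero vector whose entries sum to zero is not constant.
-/

section Variance

variable {ι R : Type*} [Fintype ι]

lemma dotProduct_diagonal_sub_vecMulVec_self_mulVec [CommRing R] [DecidableEq ι] (w v : ι → R) :
    v ⬝ᵥ ((diagonal w - vecMulVec w w) *ᵥ v) = ∑ i, w i * v i ^ 2 - (w ⬝ᵥ v) ^ 2 := by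
  have diagonal_part : v ⬝ᵥ (diagonal w *ᵥ v) = ∑ i, w i * v i ^ 2 := by
    simp only [dotProduct, mulVec_diagonal]
    exact sum_congr rfl fun i _ => by ring
  have rank_one_part : v ⬝ᵥ (vecMulVec w w *ᵥ v) = (w ⬝ᵥ v) ^ 2 := by
    rw [vecMulVec_mulVec, dotProduct_smul, dotProduct_comm v w, op_smul_eq_mul, sq]
  rw [sub_mulVec, dotProduct_sub, diagonal_part, rank_one_part]

lemma sum_mul_sub_dotProduct_sq [CommRing R] {w : ι → R} (hw : ∑ i, w i = 1) (v : ι → R) :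
    ∑ i, w i * (v i - w ⬝ᵥ v) ^ 2 = ∑ i, w i * v i ^ 2 - (w ⬝ᵥ v) ^ 2 := by
  set m := w ⬝ᵥ v with hm
  calc ∑ i, w i * (v i - m) ^ 2
      = ∑ i, (w i * v i ^ 2 - 2 * m * (w i * v i) + m ^ 2 * w i) :=
        sum_congr rfl fun i _ => by ring
    _ = ∑ i, w i * v i ^ 2 - 2 * m * m + m ^ 2 * 1 := by
        rw [sum_add_distrib, sum_sub_distrib, ← mul_sum, ← mul_sum, hw, hm, dotProduct]
    _ = ∑ i, w i * v i ^ 2 - m ^ 2 := by ring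

lemma sum_mul_sub_sq_pos [CommRing R] [LinearOrder R] [IsStrictOrderedRing R] {w v : ι → R}
    (hw : ∀ i, 0 < w i) (hv : ∃ i j, v i ≠ v j) (c : R) :
    0 < ∑ i, w i * (v i - c) ^ 2 := by
  obtain ⟨k, hk⟩ : ∃ k, v k ≠ c := by
    obtain ⟨i, j, hij⟩ := hv
    by_contra! h
    exact hij ((h i).trans (h j).symm)
  exact sum_pos' (fun i _ => mul_nonneg (hw i).le (sq_nonneg _))
    ⟨k, mem_univ k, mul_pos (hw k) (sq_pos_of_ne_zero (sub_ne_zero.mpr hk))⟩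

end Variance

lemma exists_ne_of_sum_eq_zero {ι M : Type*} [Fintype ι] [AddCommMonoid M] [IsAddTorsionFree M]
    {v : ι → M} (hv_sum : ∑ i, v i = 0) (hv : v ≠ 0) : ∃ i j, v i ≠ v j := by
  obtain ⟨i, hi⟩ := Function.ne_iff.mp hv
  have : Nonempty ι := ⟨i⟩
  by_contra! h
  have card_nsmul_eq_zero : Fintype.card ι • v i = 0 := by
    rw [← hv_sum, sum_congr rfl fun j _ => h j i, sum_const, card_univ]
  exact hi ((nsmul_eq_zero_iff_right Fintype.card_ne_zero).mp card_nsmul_eq_zero)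

lemma sum_exp_pos {ι : Type*} [Fintype ι] [Nonempty ι] (z : ι → ℝ) : 0 < ∑ i, Real.exp (z i) :=
  sum_pos (fun i _ => Real.exp_pos (z i)) univ_nonempty

lemma softmax_pos {Q : ℕ} (z : Fin Q → ℝ) (j : Fin Q) : 0 < softmax z j :=
  have : Nonempty (Fin Q) := ⟨j⟩
  div_pos (Real.exp_pos (z j)) (sum_exp_pos z)

lemma sum_softmax {Q : ℕ} [NeZero Q] (z : Fin Q → ℝ) : ∑ j, softmax z j = 1 := by
  simp only [softmax]
  rw [← sum_div, div_self (sum_exp_pos z).ne']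

theorem stmt_13_general {ι R : Type*} [Fintype ι] [DecidableEq ι] [CommRing R] [LinearOrder R]
    [IsStrictOrderedRing R] {w v : ι → R} (hw : ∀ i, 0 < w i) (hw_sum : ∑ i, w i = 1)
    (hv : ∃ i j, v i ≠ v j) :
    0 < v ⬝ᵥ ((diagonal w - vecMulVec w w) *ᵥ v) := by
  rw [dotProduct_diagonal_sub_vecMulVec_self_mulVec, ← sum_mul_sub_dotProduct_sq hw_sum]
  exact sum_mul_sub_sq_pos hw hv _

/-- The Hessian H = diag(σ(z)) − σ(z)σ(z)ᵀ of the cross-entropy loss is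
positive-definite on directions tangent to the hyperplanes { z : z ⬝ u_Q = c }:
if v ⬝ u_Q = 0 and v ≠ 0 then ⟨v, H v⟩ > 0. -/
theorem stmt_13 (Q : ℕ) (hQ : 2 ≤ Q) (z : Fin Q → ℝ)
    (H : Matrix (Fin Q) (Fin Q) ℝ)
    (hH : H = Matrix.diagonal (softmax z) - Matrix.vecMulVec (softmax z) (softmax z))
    (v : Fin Q → ℝ) (hv : v ⬝ᵥ (fun _ => (1 : ℝ)) = 0) (hv0 : v ≠ 0) :
    0 < v ⬝ᵥ (H *ᵥ v) := by
  have : NeZero Q := ⟨by omega⟩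
  have hv_sum : ∑ i, v i = 0 := by rwa [← dotProduct_one]
  rw [hH]
  exact stmt_13_general (softmax_pos z) (sum_softmax z) (exists_ne_of_sum_eq_zero hv_sum hv0)
end
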